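/- Let A be a uniform algebra on a compact Hausdorff space K and let Γ ⊆ K be a closed boundary for A in which the set of strong boundary points of A is dense (these properties hold for the Shilov boundary of A). If there exists a strong peak point for A that is a limit point of Γ (i.e., a point t₀ ∈ Γ such that every neighborhood of t₀ meets Γ∖{t₀}), then A has the convex diametral local diameter two property: the closed unit ball B_A equals the closed convex hull of the set of Δ-points of A. -/

import Mathlib

set_option maxHeartbeats 1000000
set_option synthInstance.maxHeartbeats 1000000

/-- `t₀` is a strong boundary point for the algebra `A ⊆ C(K,ℂ)`. -/
def IsStrongBoundaryPoint {K : Type*} [TopologicalSpace K] [CompactSpace K]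
    (A : Subalgebra ℂ C(K, ℂ)) (t₀ : K) : Prop :=
  ∀ U : Set K, IsOpen U → t₀ ∈ U →
    ∃ h ∈ A, h t₀ = 1 ∧ ‖h‖ = 1 ∧ ∃ c : ℝ, c < 1 ∧ ∀ t ∉ U, ‖h t‖ ≤ c

/-- `t₀` is a strong peak point for the algebra `A ⊆ C(K,ℂ)`: some `h ∈ A` satisfies
`|h t₀| = ‖h‖` and `‖h‖ > sup_{t ∈ K∖U} |h t|` for every open neighborhood `U` of `t₀`. -/
def IsStrongPeakPoint {K : Type*} [TopologicalSpace K] [CompactSpace K]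
    (A : Subalgebra ℂ C(K, ℂ)) (t₀ : K) : Prop :=
  ∃ h ∈ A, ‖h t₀‖ = ‖h‖ ∧
    ∀ U : Set K, IsOpen U → t₀ ∈ U → ∃ c : ℝ, c < ‖h‖ ∧ ∀ t ∉ U, ‖h t‖ ≤ c

/-!
A strong boundary point `t` carries peak functions `φ` with values in the disc of diameter `[0, 1]`,
that is, with `‖1 - 2 * φ‖ ≤ 1`.

If `‖f‖ ≤ 1 = ‖f t₀‖`, take many such points `t` near `t₀` and peak functions `φ_t` with almost
disjoint supports. Each `f * (1 - 2 * φ_t)` lies in the unit ball, at distance almost `2` from `f`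
because the two are opposite at `t`, and their average tends to `f`: so `f` is a `Δ`-point.

If `‖f‖ < 1` and `f t₀ = ρ * u` with `‖u‖ = 1`, changing `f` near `t₀` so as to take the values `u`
and `-u` there gives two functions whose combination with weights `(1 + ρ) / 2` and `(1 - ρ) / 2` is
close to `f`. They stay in the unit ball because `‖φ‖ ^ 2 + ‖1 - φ‖ ^ 2 ≤ 1` on the disc.
-/

open Filter Topology Metric
open scoped Finset

/-- A `Δ`-point of a normed space: a unit vector which, for every `ε > 0`, is a limit of convex
combinations of points of the unit ball at distance at least `2 - ε` from it. -/
def IsDeltaPoint {E : Type*} [NormedAddCommGroup E] [Module ℝ E] (f : E) : Prop :=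
  ‖f‖ = 1 ∧ ∀ ε > (0 : ℝ), f ∈ closure (convexHull ℝ {g : E | ‖g‖ ≤ 1 ∧ 2 - ε ≤ ‖f - g‖})

/-- `φ` is a peak function at `t`: it equals `1` at `t` and is at most `η` in modulus off `U`. Its
values are required to lie in the closed disc with diameter `[0, 1]`, which is encoded as
`‖1 - 2 * φ x‖ ≤ 1`. -/
structure PeaksAt {X : Type*} (φ : X → ℂ) (t : X) (U : Set X) (η : ℝ) : Prop where
  apply_eq_one : φ t = 1
  norm_one_sub_two_mul_le : ∀ x, ‖1 - 2 * φ x‖ ≤ 1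
  norm_le_of_notMem : ∀ x ∉ U, ‖φ x‖ ≤ η

theorem norm_one_sub_two_mul_inv_le_one {w : ℂ} (hw : 1 ≤ w.re) : ‖1 - 2 * w⁻¹‖ ≤ 1 := by
  have hw₀ : w ≠ 0 := by
    rintro rfl
    norm_num at hw
  have hdist : ‖w - 2‖ ≤ ‖w‖ := by
    rw [← sq_le_sq₀ (norm_nonneg _) (norm_nonneg _), Complex.sq_norm, Complex.sq_norm,
      Complex.normSq_apply, Complex.normSq_apply, Complex.sub_re, Complex.sub_im, Complex.re_ofNat,
      Complex.im_ofNat]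
    linarith
  rw [show 1 - 2 * w⁻¹ = (w - 2) / w by field_simp, norm_div]
  exact div_le_one_of_le₀ hdist (norm_nonneg w)

section Disc

variable {z : ℂ}

theorem sq_norm_add_sq_norm_one_sub_le_one (hz : ‖1 - 2 * z‖ ≤ 1) :
    ‖z‖ ^ 2 + ‖1 - z‖ ^ 2 ≤ 1 := by
  have hpar := parallelogram_law_with_norm ℝ (1 - z) z
  rw [show 1 - z + z = 1 by ring, show 1 - z - z = 1 - 2 * z by ring, norm_one] at hpar
  nlinarith [norm_nonneg (1 - 2 * z)]

theorem norm_le_one_of_norm_one_sub_two_mul_le (hz : ‖1 - 2 * z‖ ≤ 1) : ‖z‖ ≤ 1 := by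
  nlinarith [sq_norm_add_sq_norm_one_sub_le_one hz, sq_nonneg ‖1 - z‖, norm_nonneg z]

theorem norm_one_sub_le_one_of_norm_one_sub_two_mul_le (hz : ‖1 - 2 * z‖ ≤ 1) :
    ‖1 - z‖ ≤ 1 :=
  norm_le_one_of_norm_one_sub_two_mul_le <| by
    rwa [show 1 - 2 * (1 - z) = -(1 - 2 * z) by ring, norm_neg]

theorem sq_norm_add_ofReal_mul_one_sub_le (hz : ‖1 - 2 * z‖ ≤ 1) {c : ℝ} (hc : c ≤ 1) :
    ‖z + c * (1 - z)‖ ^ 2 ≤ 1 - (1 - c ^ 2) * ‖1 - z‖ ^ 2 := by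
  have expand : ‖z + c * (1 - z)‖ ^ 2 =
      ‖z‖ ^ 2 + c ^ 2 * ‖1 - z‖ ^ 2 + c * (1 - ‖z‖ ^ 2 - ‖1 - z‖ ^ 2) := by
    simp only [Complex.sq_norm, Complex.normSq_apply, Complex.add_re, Complex.add_im,
      Complex.mul_re, Complex.mul_im, Complex.sub_re, Complex.sub_im, Complex.one_re,
      Complex.one_im, Complex.ofReal_re, Complex.ofReal_im]
    ring
  have hdefect : 0 ≤ 1 - ‖z‖ ^ 2 - ‖1 - z‖ ^ 2 := by
    linarith [sq_norm_add_sq_norm_one_sub_le_one hz]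
  linarith [mul_le_of_le_one_left hdefect hc]

theorem norm_add_ofReal_mul_one_sub_le (hz : ‖1 - 2 * z‖ ≤ 1) {c : ℝ} (hc : |c| ≤ 1) :
    ‖z + c * (1 - z)‖ ≤ 1 - (1 - |c|) / 2 * ‖1 - z‖ ^ 2 := by
  have hsq := sq_norm_add_ofReal_mul_one_sub_le hz (le_of_abs_le hc)
  have hgap : 1 - |c| ≤ 1 - c ^ 2 := by nlinarith [sq_abs c, abs_nonneg c]
  have hdrop : (1 - |c|) * ‖1 - z‖ ^ 2 ≤ (1 - c ^ 2) * ‖1 - z‖ ^ 2 := by gcongr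
  linarith [two_mul_le_add_sq ‖z + c * (1 - z)‖ 1]

end Disc

section PeakCorrection

variable {v z a b : ℂ}

/-- The modification of `f` along `φ` that equals `v` where `φ = 1` and `f` where `φ = 0`. It is
meant to be used with `a` the value of `f` at the peak of `φ`; the factor `(1 - φ) ^ 2` makes the
error `f - a` negligible there, to the order at which the values of `φ` can approach the unit
circle. -/
def peakCorrection {R : Type*} [Ring R] [Algebra ℂ R] (f φ : R) (a v : ℂ) : R :=
  v • φ + a • (1 - φ) + (f - algebraMap ℂ R a) * (1 - φ) ^ 2

theorem norm_peakCorrection_le_one_of_norm_sub_le (hz : ‖1 - 2 * z‖ ≤ 1) (hv : ‖v‖ = 1) {c : ℝ}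
    (hc : |c| ≤ 1) (hb : ‖b - c * v‖ ≤ (1 - |c|) / 2) : ‖peakCorrection b z (c * v) v‖ ≤ 1 := by
  have split : peakCorrection b z (c * v) v =
      v * (z + c * (1 - z)) + (b - c * v) * (1 - z) ^ 2 := by
    simp only [peakCorrection, smul_eq_mul, Algebra.algebraMap_self, RingHom.id_apply]
    ring
  calc ‖peakCorrection b z (c * v) v‖
      ≤ ‖v * (z + c * (1 - z))‖ + ‖(b - c * v) * (1 - z) ^ 2‖ := split ▸ norm_add_le _ _
    _ = ‖z + c * (1 - z)‖ + ‖b - c * v‖ * ‖1 - z‖ ^ 2 := by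
      rw [norm_mul, norm_mul, norm_pow, hv, one_mul]
    _ ≤ (1 - (1 - |c|) / 2 * ‖1 - z‖ ^ 2) + (1 - |c|) / 2 * ‖1 - z‖ ^ 2 := by
      gcongr
      exact norm_add_ofReal_mul_one_sub_le hz hc
    _ = 1 := sub_add_cancel _ _

theorem norm_peakCorrection_le (hz : ‖1 - 2 * z‖ ≤ 1) (ha : ‖a‖ ≤ 1) (hv : ‖v‖ ≤ 1) :
    ‖peakCorrection b z a v‖ ≤ 2 * ‖z‖ + ‖b‖ := by
  have hz₁ := norm_one_sub_le_one_of_norm_one_sub_two_mul_le hz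
  have split : peakCorrection b z a v = v * z + a * (1 - z) * z + b * (1 - z) ^ 2 := by
    simp only [peakCorrection, smul_eq_mul, Algebra.algebraMap_self, RingHom.id_apply]
    ring
  calc ‖peakCorrection b z a v‖
      ≤ ‖v * z‖ + ‖a * (1 - z) * z‖ + ‖b * (1 - z) ^ 2‖ := split ▸ norm_add₃_le
    _ = ‖v‖ * ‖z‖ + ‖a‖ * ‖1 - z‖ * ‖z‖ + ‖b‖ * ‖1 - z‖ ^ 2 := by
      simp only [norm_mul, norm_pow]
    _ ≤ 1 * ‖z‖ + 1 * 1 * ‖z‖ + ‖b‖ * 1 ^ 2 := by gcongr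
    _ = 2 * ‖z‖ + ‖b‖ := by ring

theorem norm_peakCorrection_self_sub_le (hz : ‖1 - 2 * z‖ ≤ 1) :
    ‖peakCorrection b z a a - b‖ ≤ 2 * ‖a - b‖ * ‖z‖ := by
  have factor : peakCorrection b z a a - b = (1 + (1 - z)) * (a - b) * z := by
    simp only [peakCorrection, smul_eq_mul, Algebra.algebraMap_self, RingHom.id_apply]
    ring
  have hfactor : ‖1 + (1 - z)‖ ≤ 2 := by
    have hz₁ := norm_one_sub_le_one_of_norm_one_sub_two_mul_le hz
    linarith [norm_add_le 1 (1 - z), norm_one (α := ℂ)]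
  rw [factor, norm_mul, norm_mul]
  gcongr

theorem smul_peakCorrection_add_smul_peakCorrection {R : Type*} [Ring R] [Algebra ℂ R] (f φ : R)
    (a v₁ v₂ : ℂ) {w₁ w₂ : ℝ} (hw : w₁ + w₂ = 1) :
    w₁ • peakCorrection f φ a v₁ + w₂ • peakCorrection f φ a v₂ =
      peakCorrection f φ a (w₁ • v₁ + w₂ • v₂) := by
  simp only [peakCorrection, add_assoc]
  rw [smul_add w₁ (v₁ • φ), smul_add w₂ (v₂ • φ), add_add_add_comm, ← add_smul w₁ w₂, hw, one_smul,
    add_smul, smul_assoc, smul_assoc]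

end PeakCorrection

theorem norm_sum_le_of_subsingleton_lt_norm {ι E : Type*} [SeminormedAddCommGroup E] {s : Finset ι}
    {v : ι → E} {C η : ℝ} (hC : 0 ≤ C) (hη : 0 ≤ η) (hv : ∀ i ∈ s, ‖v i‖ ≤ C)
    (hlarge : {i | i ∈ s ∧ η < ‖v i‖}.Subsingleton) : ‖∑ i ∈ s, v i‖ ≤ C + #s * η := by
  classical
  by_cases h : ∃ i ∈ s, η < ‖v i‖
  · obtain ⟨i, his, hi⟩ := h
    have hrest : ‖∑ j ∈ s.erase i, v j‖ ≤ #(s.erase i) * η :=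
      (norm_sum_le_of_le _ fun j hj ↦ not_lt.1 fun hlt ↦ Finset.ne_of_mem_erase hj <|
        hlarge ⟨Finset.mem_of_mem_erase hj, hlt⟩ ⟨his, hi⟩).trans_eq <| by
          rw [Finset.sum_const, nsmul_eq_mul]
    calc ‖∑ j ∈ s, v j‖ = ‖v i + ∑ j ∈ s.erase i, v j‖ := by rw [Finset.add_sum_erase s v his]
      _ ≤ C + #(s.erase i) * η := (norm_add_le _ _).trans (add_le_add (hv i his) hrest)
      _ ≤ C + #s * η := by
        gcongr
        exact Finset.erase_subset i s
  · push Not at h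
    calc ‖∑ i ∈ s, v i‖ ≤ ∑ _i ∈ s, η := norm_sum_le_of_le _ h
      _ = #s * η := by rw [Finset.sum_const, nsmul_eq_mul]
      _ ≤ C + #s * η := le_add_of_nonneg_left hC

section Topological

variable {X : Type*} [TopologicalSpace X] {x : X} {S T U : Set X}

theorem accPt_principal_of_subset_closure [T1Space X] (hTS : T ⊆ closure S)
    (hx : x ∈ closure (T \ {x})) : AccPt x (𝓟 S) := by
  rw [mem_closure_iff_clusterPt, ← accPt_principal_iff_clusterPt] at hx
  exact (derivedSet_closure S).subset (derivedSet_mono _ _ hTS hx)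

theorem exists_finset_pairwiseDisjoint_of_accPt [T2Space X] (hx : AccPt x (𝓟 S)) (hU : U ∈ 𝓝 x)
    (n : ℕ) : ∃ s : Finset X, ↑s ⊆ U ∩ S ∧ #s = n ∧ ∃ W : X → Set X,
      (∀ t, t ∈ W t ∧ IsOpen (W t)) ∧ (s : Set X).PairwiseDisjoint W := by
  obtain ⟨s, hsub, hcard⟩ :=
    (Set.Infinite.of_accPt (hx.nhds_inter hU)).exists_subset_card_eq n
  exact ⟨s, hsub, hcard, s.finite_toSet.t2_separation⟩

end Topological

theorem PeaksAt.norm_le_one {X : Type*} {φ : X → ℂ} {t : X} {U : Set X} {η : ℝ}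
    (hφ : PeaksAt φ t U η) (x : X) : ‖φ x‖ ≤ 1 :=
  norm_le_one_of_norm_one_sub_two_mul_le (hφ.norm_one_sub_two_mul_le x)

theorem PeaksAt.norm_sum_apply_le {X : Type*} {s : Finset X} {φ : X → X → ℂ} {W : X → Set X}
    {η : ℝ} (hη : 0 ≤ η) (hφ : ∀ t ∈ s, PeaksAt (φ t) t (W t) η)
    (hW : (s : Set X).PairwiseDisjoint W) (x : X) : ‖∑ t ∈ s, φ t x‖ ≤ 1 + #s * η := by
  refine norm_sum_le_of_subsingleton_lt_norm zero_le_one hη (fun t ht ↦ (hφ t ht).norm_le_one x) ?_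
  rintro t ⟨ht, hlt⟩ t' ⟨ht', hlt'⟩
  have mem_of_lt : ∀ r ∈ s, η < ‖φ r x‖ → x ∈ W r := fun r hr hlt ↦
    by_contra fun hx ↦ hlt.not_ge ((hφ r hr).norm_le_of_notMem x hx)
  exact hW.elim_set ht ht' x (mem_of_lt t ht hlt) (mem_of_lt t' ht' hlt')

section Subalgebra

variable {K : Type*} [TopologicalSpace K] {A : Subalgebra ℂ C(K, ℂ)} {t₀ : K}

theorem PeaksAt.peakCorrection_apply_self {f φ : A} {U : Set K} {η : ℝ} (hφ : PeaksAt φ.1 t₀ U η)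
    (a v : ℂ) : (peakCorrection f φ a v).1 t₀ = v := by
  change peakCorrection (f.1 t₀) (φ.1 t₀) a v = v
  simp [peakCorrection, hφ.apply_eq_one]

variable [CompactSpace K]

theorem IsStrongPeakPoint.isStrongBoundaryPoint (ht₀ : IsStrongPeakPoint A t₀) :
    IsStrongBoundaryPoint A t₀ := by
  obtain ⟨h, hA, hmax, hpeak⟩ := ht₀
  intro U hU htU
  obtain ⟨c, hc, hcU⟩ := hpeak U hU htU
  rcases (norm_nonneg h).eq_or_lt with hzero | hpos
  · have : Nonempty K := ⟨t₀⟩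
    exact ⟨1, A.one_mem, rfl, norm_one, 0, zero_lt_one, fun t ht ↦
      absurd (hcU t ht) (by linarith [norm_nonneg (h t)])⟩
  · have hne : h t₀ ≠ 0 := norm_pos_iff.1 (hmax ▸ hpos)
    refine ⟨(h t₀)⁻¹ • h, A.smul_mem hA _, inv_mul_cancel₀ hne, ?_, c / ‖h‖,
      (div_lt_one hpos).2 hc, fun t ht ↦ ?_⟩
    · rw [norm_smul, norm_inv, hmax, inv_mul_cancel₀ hpos.ne']
    · rw [ContinuousMap.smul_apply, norm_smul, norm_inv, hmax, div_eq_inv_mul]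
      gcongr
      exact hcU t ht

theorem exists_apply_eq_inv_one_add_mul_one_sub [CompleteSpace A] {h : C(K, ℂ)} (hA : h ∈ A)
    (hh : ‖h‖ ≤ 1) {M : ℝ} (hM : 0 ≤ M) : ∃ φ : A, ∀ x, φ.1 x = (1 + M * (1 - h x))⁻¹ := by
  rcases isEmpty_or_nonempty K with hK | hK
  · exact ⟨0, hK.elim⟩
  have : NormOneClass A := ⟨norm_one (α := C(K, ℂ))⟩
  set a : A := ⟨h, hA⟩
  have ha : ‖a‖ ≤ 1 := hh
  have hlt : ‖(M : ℂ) • a‖ < ‖((1 + M : ℝ) : ℂ)‖ := by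
    rw [norm_smul, Complex.norm_of_nonneg hM, Complex.norm_of_nonneg (by positivity)]
    exact (mul_le_of_le_one_right hM ha).trans_lt (lt_one_add M)
  obtain ⟨φ, hφ⟩ := (spectrum.mem_resolventSet_of_norm_lt hlt).exists_right_inv
  refine ⟨φ, fun x ↦ eq_inv_of_mul_eq_one_right ?_⟩
  have hφx : (((1 + M : ℝ) : ℂ) - M * h x) * φ.1 x = 1 := congrArg (fun g : A ↦ g.1 x) hφ
  push_cast at hφx
  linear_combination hφx

/-- `h` is turned into `1 / (1 + M (1 - h))` for a large `M`: the denominator has real part at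
least `1`, which gives the disc condition. -/
theorem IsStrongBoundaryPoint.exists_peaksAt [CompleteSpace A] (ht₀ : IsStrongBoundaryPoint A t₀)
    {U : Set K} (hU : IsOpen U) (htU : t₀ ∈ U) {η : ℝ} (hη : 0 < η) :
    ∃ φ : A, PeaksAt φ.1 t₀ U η := by
  obtain ⟨h, hA, hone, hnorm, c, hc, hcU⟩ := ht₀ U hU htU
  have hc' : 0 < 1 - c := sub_pos.2 hc
  set M := (η * (1 - c))⁻¹ with hM
  have hM₀ : 0 ≤ M := by positivity
  obtain ⟨φ, hφ⟩ := exists_apply_eq_inv_one_add_mul_one_sub hA hnorm.le hM₀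
  have re_denom (x : K) : (1 + M * (1 - h x) : ℂ).re = 1 + M * (1 - (h x).re) := by simp
  have re_le (x : K) : (h x).re ≤ 1 :=
    (Complex.re_le_norm _).trans ((h.norm_coe_le_norm x).trans_eq hnorm)
  refine ⟨φ, by simp [hφ, hone], fun x ↦ ?_, fun x hx ↦ ?_⟩
  · rw [hφ]
    apply norm_one_sub_two_mul_inv_le_one
    rw [re_denom]
    exact le_add_of_nonneg_right (mul_nonneg hM₀ (sub_nonneg.2 (re_le x)))
  · have hdenom : η⁻¹ ≤ ‖(1 + M * (1 - h x) : ℂ)‖ := calc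
      η⁻¹ = M * (1 - c) := by rw [hM]; field_simp
      _ ≤ 1 + M * (1 - (h x).re) := by
        have := (Complex.re_le_norm (h x)).trans (hcU x hx)
        nlinarith
      _ ≤ _ := re_denom x ▸ Complex.re_le_norm _
    rw [hφ, norm_inv]
    exact inv_le_of_inv_le₀ hη hdenom

theorem norm_sub_sum_smul_mul_one_sub_two_mul_le {f : A} (hf : ‖f‖ ≤ 1) {s : Finset K}
    (hs : s.Nonempty) {φ : K → A} {W : K → Set K} (hW : (s : Set K).PairwiseDisjoint W)
    (hφ : ∀ t ∈ s, PeaksAt (φ t).1 t (W t) (1 / #s)) :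
    ‖f - ∑ t ∈ s, (1 / #s : ℝ) • (f * (1 - 2 * φ t))‖ ≤ 4 / #s := by
  have hcard : (#s : ℝ) ≠ 0 := by exact_mod_cast hs.card_ne_zero
  have hdiff : f - ∑ t ∈ s, (1 / #s : ℝ) • (f * (1 - 2 * φ t)) =
      (2 / #s : ℝ) • (f * ∑ t ∈ s, φ t) := by
    rw [← Finset.smul_sum, ← Finset.mul_sum, Finset.sum_sub_distrib, ← Finset.mul_sum,
      Finset.sum_const, mul_sub, mul_smul_comm, mul_one, smul_sub, ← Nat.cast_smul_eq_nsmul ℝ,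
      smul_smul, one_div_mul_cancel hcard, one_smul, two_mul, mul_add]
    module
  have hsum : ‖∑ t ∈ s, φ t‖ ≤ 1 + #s * (1 / #s) := by
    refine (ContinuousMap.norm_le _ (by positivity)).2 fun x ↦ ?_
    simpa using PeaksAt.norm_sum_apply_le (by positivity) hφ hW x
  calc ‖f - ∑ t ∈ s, (1 / #s : ℝ) • (f * (1 - 2 * φ t))‖
      = 2 / #s * ‖f * ∑ t ∈ s, φ t‖ := by
        rw [hdiff, norm_smul, Real.norm_of_nonneg (by positivity)]
    _ ≤ 2 / #s * (1 * (1 + #s * (1 / #s))) := by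
      gcongr
      exact (norm_mul_le _ _).trans (by gcongr)
    _ = 4 / #s := by
      field_simp
      norm_num

theorem PeaksAt.norm_mul_one_sub_two_mul_le {f φ : A} {t : K} {U : Set K} {η : ℝ}
    (hφ : PeaksAt φ.1 t U η) : ‖f * (1 - 2 * φ)‖ ≤ ‖f‖ := by
  refine (ContinuousMap.norm_le _ (norm_nonneg f)).2 fun x ↦ ?_
  calc ‖f.1 x * (1 - 2 * φ.1 x)‖ = ‖f.1 x‖ * ‖1 - 2 * φ.1 x‖ := norm_mul _ _
    _ ≤ ‖f‖ * 1 := by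
      gcongr
      · exact f.1.norm_coe_le_norm x
      · exact hφ.norm_one_sub_two_mul_le x
    _ = ‖f‖ := mul_one _

theorem PeaksAt.two_mul_norm_apply_le {f φ : A} {t : K} {U : Set K} {η : ℝ}
    (hφ : PeaksAt φ.1 t U η) : 2 * ‖f.1 t‖ ≤ ‖f - f * (1 - 2 * φ)‖ := by
  have apply_peak : (f - f * (1 - 2 * φ)).1 t = 2 * f.1 t := by
    change f.1 t - f.1 t * (1 - 2 * φ.1 t) = _
    rw [hφ.apply_eq_one]
    ring
  calc 2 * ‖f.1 t‖ = ‖(f - f * (1 - 2 * φ)).1 t‖ := by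
        rw [apply_peak, norm_mul, Complex.norm_ofNat]
    _ ≤ ‖f - f * (1 - 2 * φ)‖ := (f - f * (1 - 2 * φ)).1.norm_coe_le_norm t

theorem isDeltaPoint_of_norm_apply_eq_one [T2Space K] [CompleteSpace A]
    (hacc : AccPt t₀ (𝓟 {t | IsStrongBoundaryPoint A t})) {f : A} (hf : ‖f‖ ≤ 1)
    (hft₀ : ‖f.1 t₀‖ = 1) : IsDeltaPoint f := by
  refine ⟨hf.antisymm (hft₀ ▸ f.1.norm_coe_le_norm t₀), fun ε hε ↦ ?_⟩
  refine SeminormedAddCommGroup.mem_closure_iff.2 fun κ hκ ↦ ?_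
  obtain ⟨n, hn⟩ := exists_nat_gt (4 / κ)
  have hn₀ : (0 : ℝ) < n := (by positivity : 0 < 4 / κ).trans hn
  have hU : {x | 1 - ε / 2 < ‖f.1 x‖} ∈ 𝓝 t₀ :=
    (isOpen_lt continuous_const (by fun_prop)).mem_nhds (by simp [hft₀, hε])
  obtain ⟨s, hsU, rfl, W, hW, hdisj⟩ := exists_finset_pairwiseDisjoint_of_accPt hacc hU n
  have hs : s.Nonempty := Finset.card_pos.1 (by exact_mod_cast hn₀)
  have hpeak (t : K) (ht : t ∈ s) : ∃ φ : A, PeaksAt φ.1 t (W t) (1 / #s) :=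
    IsStrongBoundaryPoint.exists_peaksAt (hsU ht).2 (hW t).2 (hW t).1 (by positivity)
  choose! φ hφ using hpeak
  refine ⟨∑ t ∈ s, (1 / #s : ℝ) • (f * (1 - 2 * φ t)), ?_, ?_⟩
  · refine (convex_convexHull ℝ _).sum_mem (fun _ _ ↦ by positivity) ?_ fun t ht ↦
      subset_convexHull ℝ _ ⟨(hφ t ht).norm_mul_one_sub_two_mul_le.trans hf, ?_⟩
    · rw [Finset.sum_const, nsmul_eq_mul, mul_one_div_cancel hn₀.ne']
    · have : 1 - ε / 2 < ‖f.1 t‖ := (hsU ht).1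
      linarith [(hφ t ht).two_mul_norm_apply_le (f := f)]
  · exact (norm_sub_sum_smul_mul_one_sub_two_mul_le hf hs hdisj hφ).trans_lt
      ((div_lt_comm₀ hκ hn₀).1 hn)

theorem PeaksAt.norm_peakCorrection_le_one {f φ : A} {κ : ℝ} (hf : ‖f‖ + 2 * κ ≤ 1)
    (hφ : PeaksAt φ.1 t₀ {x | ‖f.1 x - f.1 t₀‖ < κ} κ) {c : ℝ} {v : ℂ} (hv : ‖v‖ = 1)
    (hfc : f.1 t₀ = c * v) : ‖peakCorrection f φ (f.1 t₀) v‖ ≤ 1 := by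
  have hft₀ : ‖f.1 t₀‖ ≤ ‖f‖ := f.1.norm_coe_le_norm t₀
  have hc : |c| = ‖f.1 t₀‖ := by
    rw [hfc, norm_mul, hv, mul_one, Complex.norm_real, Real.norm_eq_abs]
  refine (ContinuousMap.norm_le _ zero_le_one).2 fun x ↦ ?_
  change ‖peakCorrection (f.1 x) (φ.1 x) (f.1 t₀) v‖ ≤ 1
  have hdisc := hφ.norm_one_sub_two_mul_le x
  by_cases hx : ‖f.1 x - f.1 t₀‖ < κ
  · have hκ : 0 < κ := (norm_nonneg _).trans_lt hx
    rw [hfc] at hx ⊢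
    exact norm_peakCorrection_le_one_of_norm_sub_le hdisc hv (by linarith) (by linarith)
  · have hφx : ‖φ.1 x‖ ≤ κ := hφ.norm_le_of_notMem x hx
    have hκ : 0 ≤ κ := (norm_nonneg _).trans hφx
    linarith [norm_peakCorrection_le (b := f.1 x) hdisc (by linarith : ‖f.1 t₀‖ ≤ 1) hv.le,
      show ‖f.1 x‖ ≤ ‖f‖ from f.1.norm_coe_le_norm x]

theorem PeaksAt.norm_peakCorrection_apply_self_sub_le {f φ : A} (hf : ‖f‖ ≤ 1) {κ : ℝ} (hκ : 0 ≤ κ)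
    (hφ : PeaksAt φ.1 t₀ {x | ‖f.1 x - f.1 t₀‖ < κ} κ) :
    ‖peakCorrection f φ (f.1 t₀) (f.1 t₀) - f‖ ≤ 4 * κ := by
  refine (ContinuousMap.norm_le _ (by positivity)).2 fun x ↦ ?_
  refine (norm_peakCorrection_self_sub_le (hφ.norm_one_sub_two_mul_le x)).trans ?_
  by_cases hx : ‖f.1 x - f.1 t₀‖ < κ
  · calc 2 * ‖f.1 t₀ - f.1 x‖ * ‖φ.1 x‖ ≤ 2 * κ * 1 := by
          gcongr
          · exact (norm_sub_rev _ _).trans_le hx.le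
          · exact hφ.norm_le_one x
      _ ≤ 4 * κ := by linarith
  · have norm_apply_le (y : K) : ‖f.1 y‖ ≤ 1 := (f.1.norm_coe_le_norm y).trans hf
    calc 2 * ‖f.1 t₀ - f.1 x‖ * ‖φ.1 x‖ ≤ 2 * (1 + 1) * κ := by
          gcongr
          · exact (norm_sub_le _ _).trans (add_le_add (norm_apply_le t₀) (norm_apply_le x))
          · exact hφ.norm_le_of_notMem x hx
      _ = 4 * κ := by ring

theorem IsStrongBoundaryPoint.mem_closure_convexHull [CompleteSpace A]
    (ht₀ : IsStrongBoundaryPoint A t₀) {f : A} (hf : ‖f‖ < 1) :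
    f ∈ closure (convexHull ℝ {g : A | ‖g‖ ≤ 1 ∧ ‖g.1 t₀‖ = 1}) := by
  refine SeminormedAddCommGroup.mem_closure_iff.2 fun ε hε ↦ ?_
  have hbound : 0 < min ((1 - ‖f‖) / 2) (ε / 4) :=
    lt_min (half_pos (sub_pos.2 hf)) (by positivity)
  obtain ⟨κ, hκ, hκlt⟩ := exists_between hbound
  obtain ⟨hκf, hκε⟩ := lt_min_iff.1 hκlt
  obtain ⟨φ, hφ⟩ := ht₀.exists_peaksAt (U := {x | ‖f.1 x - f.1 t₀‖ < κ})
    (isOpen_lt (by fun_prop) continuous_const) (by simpa using hκ) hκ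
  refine ⟨peakCorrection f φ (f.1 t₀) (f.1 t₀), ?_, ?_⟩
  · set ρ := ‖f.1 t₀‖
    set u := Complex.exp ((f.1 t₀).arg * Complex.I)
    have hu : ‖u‖ = 1 := Complex.norm_exp_ofReal_mul_I _
    have hρu : f.1 t₀ = ρ * u := (Complex.norm_mul_exp_arg_mul_I _).symm
    have hρ : ρ ≤ 1 := (f.1.norm_coe_le_norm t₀).trans hf.le
    have correction_mem {c : ℝ} {v : ℂ} (hv : ‖v‖ = 1) (hc : f.1 t₀ = c * v) :
        peakCorrection f φ (f.1 t₀) v ∈ convexHull ℝ {g : A | ‖g‖ ≤ 1 ∧ ‖g.1 t₀‖ = 1} :=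
      subset_convexHull ℝ _ ⟨hφ.norm_peakCorrection_le_one (by linarith) hv hc,
        by rw [hφ.peakCorrection_apply_self, hv]⟩
    have hcomb : ((1 + ρ) / 2) • u + ((1 - ρ) / 2) • -u = f.1 t₀ := by
      rw [hρu, ← Complex.real_smul]
      module
    have hweights : (1 + ρ) / 2 + (1 - ρ) / 2 = 1 := by ring
    have hmem := convex_convexHull ℝ _ (correction_mem hu hρu)
      (correction_mem (c := -ρ) (v := -u) (by rw [norm_neg, hu]) (by simpa using hρu))
      (by positivity) (by linarith) hweights
    rwa [smul_peakCorrection_add_smul_peakCorrection _ _ _ _ _ hweights, hcomb] at hmem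
  · rw [norm_sub_rev]
    exact (hφ.norm_peakCorrection_apply_self_sub_le hf.le hκ.le).trans_lt (by linarith)

theorem stmt_19_general [T2Space K] (hAclosed : IsClosed (A : Set C(K, ℂ)))
    (ht₀ : IsStrongBoundaryPoint A t₀) (hacc : AccPt t₀ (𝓟 {t | IsStrongBoundaryPoint A t})) :
    closedBall (0 : A) 1 = closure (convexHull ℝ {h : A | IsDeltaPoint h}) := by
  have : CompleteSpace A := hAclosed.completeSpace_coe
  apply Set.Subset.antisymm
  · rw [← closure_ball (0 : A) one_ne_zero]
    refine closure_minimal (fun f hf ↦ ?_) isClosed_closure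
    exact closure_mono (convexHull_mono fun g hg ↦ isDeltaPoint_of_norm_apply_eq_one hacc hg.1 hg.2)
      (ht₀.mem_closure_convexHull (mem_ball_zero_iff.1 hf))
  · exact closure_minimal (convexHull_min (fun g hg ↦ mem_closedBall_zero_iff.2 hg.1.le)
      (convex_closedBall 0 1)) isClosed_closedBall

end Subalgebra

/- STATEMENT 19: Let `A` be a uniform algebra on a compact Hausdorff space `K` and
`Γ` a closed boundary for `A` in which the strong boundary points of `A` are dense.
If some strong peak point for `A` is a limit point of `Γ`, then `A` has the convex
diametral local diameter two property: the closed unit ball of `A` is the closed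
convex hull of the set of Δ-points of `A`. -/
theorem stmt_19 {K : Type*} [TopologicalSpace K] [CompactSpace K] [T2Space K]
    (A : Subalgebra ℂ C(K, ℂ)) (hAclosed : IsClosed (A : Set C(K, ℂ)))
    (hAsep : ∀ s t : K, s ≠ t → ∃ g ∈ A, g s ≠ g t)
    (Γ : Set K) (hΓclosed : IsClosed Γ)
    (hΓbd : ∀ g ∈ A, ∃ t ∈ Γ, ‖g t‖ = ‖g‖)
    (hΓdense : Γ ⊆ closure {t | t ∈ Γ ∧ IsStrongBoundaryPoint A t})
    (hpeak : ∃ t₀ ∈ Γ, IsStrongPeakPoint A t₀ ∧ t₀ ∈ closure (Γ \ {t₀})) :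
    Metric.closedBall (0 : A) 1 =
      closure (convexHull ℝ
        {h : A | ‖h‖ = 1 ∧ ∀ ε > (0 : ℝ),
          h ∈ closure (convexHull ℝ {g : A | ‖g‖ ≤ 1 ∧ 2 - ε ≤ ‖h - g‖})}) := by
  obtain ⟨t₀, -, ht₀, hlim⟩ := hpeak
  exact stmt_19_general hAclosed ht₀.isStrongBoundaryPoint
    (accPt_principal_of_subset_closure (hΓdense.trans (closure_mono fun _ ht ↦ ht.2)) hlim)
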